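/- For every L_⊳-formula φ: φ ∈ ICK ⊕ (p ⊳ p) ⊕ (((p ⊳ q) ∧ (q ⊳ r)) → (p ⊳ r)) if and only if φ is valid on every conditional Kripke frame (X, ≤, 𝓡) satisfying, for all worlds x ∈ X and all upsets a, b: R_a[x] ⊆ a, and R_a[x] ⊆ b implies R_a[x] ⊆ ↑(R_b[x]). -/

import Mathlib

/-! ## The conditional language `L_⊳` -/

/-- Formulas of the conditional language `L_⊳`, with proposition letters
indexed by the countable set `ℕ`. -/
inductive CForm : Type where
  | var : ℕ → CForm
  | bot : CForm
  | and : CForm → CForm → CForm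
  | or : CForm → CForm → CForm
  | imp : CForm → CForm → CForm
  | cond : CForm → CForm → CForm

/-- `⊤ := ⊥ → ⊥`. -/
def cTop : CForm := CForm.imp CForm.bot CForm.bot

/-- `φ ↔ ψ := (φ → ψ) ∧ (ψ → φ)`. -/
def cIff (φ ψ : CForm) : CForm := CForm.and (CForm.imp φ ψ) (CForm.imp ψ φ)

/-- Uniform substitution of formulas for proposition letters. -/
def psubst (σ : ℕ → CForm) : CForm → CForm
  | CForm.var q => σ q
  | CForm.bot => CForm.bot
  | CForm.and φ ψ => CForm.and (psubst σ φ) (psubst σ ψ)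
  | CForm.or φ ψ => CForm.or (psubst σ φ) (psubst σ ψ)
  | CForm.imp φ ψ => CForm.imp (psubst σ φ) (psubst σ ψ)
  | CForm.cond φ ψ => CForm.cond (psubst σ φ) (psubst σ ψ)

/-- The logic `ICK ⊕ Γ`: the smallest set of `L_⊳`-formulas containing an
axiomatisation of intuitionistic propositional logic, the formulas of `Γ`, the
axioms `(k_c)` and `(n_c)`, closed under uniform substitution, modus ponens and
the two congruence rules. -/
inductive ICK (Γ : Set CForm) : CForm → Prop where
  | prem {φ : CForm} : φ ∈ Γ → ICK Γ φ
  | a1 : ICK Γ (CForm.imp (CForm.and (CForm.var 0) (CForm.var 1)) (CForm.var 0))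
  | a2 : ICK Γ (CForm.imp (CForm.and (CForm.var 0) (CForm.var 1)) (CForm.var 1))
  | a3 : ICK Γ (CForm.imp (CForm.imp (CForm.var 0) (CForm.var 1))
      (CForm.imp (CForm.imp (CForm.var 0) (CForm.var 2))
        (CForm.imp (CForm.var 0) (CForm.and (CForm.var 1) (CForm.var 2)))))
  | a4 : ICK Γ (CForm.imp (CForm.var 0) (CForm.or (CForm.var 0) (CForm.var 1)))
  | a5 : ICK Γ (CForm.imp (CForm.var 1) (CForm.or (CForm.var 0) (CForm.var 1)))
  | a6 : ICK Γ (CForm.imp (CForm.imp (CForm.var 0) (CForm.var 2))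
      (CForm.imp (CForm.imp (CForm.var 1) (CForm.var 2))
        (CForm.imp (CForm.or (CForm.var 0) (CForm.var 1)) (CForm.var 2))))
  | a7 : ICK Γ (CForm.imp CForm.bot (CForm.var 0))
  | a8 : ICK Γ (CForm.imp (CForm.var 0) (CForm.imp (CForm.var 1) (CForm.var 0)))
  | a9 : ICK Γ (CForm.imp
      (CForm.imp (CForm.var 0) (CForm.imp (CForm.var 1) (CForm.var 2)))
      (CForm.imp (CForm.imp (CForm.var 0) (CForm.var 1))
        (CForm.imp (CForm.var 0) (CForm.var 2))))
  | kc : ICK Γ (cIff (CForm.cond (CForm.var 0) (CForm.and (CForm.var 1) (CForm.var 2)))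
      (CForm.and (CForm.cond (CForm.var 0) (CForm.var 1))
        (CForm.cond (CForm.var 0) (CForm.var 2))))
  | nc : ICK Γ (cIff (CForm.cond (CForm.var 0) cTop) cTop)
  | subst {φ : CForm} (σ : ℕ → CForm) : ICK Γ φ → ICK Γ (psubst σ φ)
  | mp {φ ψ : CForm} : ICK Γ (CForm.imp φ ψ) → ICK Γ φ → ICK Γ ψ
  | congL {φ ψ χ : CForm} :
      ICK Γ (cIff φ ψ) → ICK Γ (cIff (CForm.cond φ χ) (CForm.cond ψ χ))
  | congR {φ ψ χ : CForm} :
      ICK Γ (cIff φ ψ) → ICK Γ (cIff (CForm.cond χ φ) (CForm.cond χ ψ))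

/-! ## Conditional Kripke frames and semantics -/

/-- `a` is an upset (upward closed set) w.r.t. the relation `le`. -/
def IsUpset {X : Type} (le : X → X → Prop) (a : Set X) : Prop :=
  ∀ ⦃x y : X⦄, le x y → x ∈ a → y ∈ a

/-- The upward closure `↑s` of a set `s` w.r.t. the relation `le`. -/
def upCl {X : Type} (le : X → X → Prop) (s : Set X) : Set X :=
  {z | ∃ y ∈ s, le y z}

/-- Truth sets of `L_⊳`-formulas, by intuitionistic Kripke semantics for the
propositional connectives, where `x ⊨ φ ⊳ ψ` iff every `y` with
`x R_{V(φ)} y` satisfies `ψ` (here `V(φ)` is the truth set of `φ`). -/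
def csat {X : Type} (le : X → X → Prop) (R : Set X → X → X → Prop)
    (V : ℕ → Set X) : CForm → Set X
  | CForm.var p => V p
  | CForm.bot => ∅
  | CForm.and φ ψ => csat le R V φ ∩ csat le R V ψ
  | CForm.or φ ψ => csat le R V φ ∪ csat le R V ψ
  | CForm.imp φ ψ => {x | ∀ y, le x y → y ∈ csat le R V φ → y ∈ csat le R V ψ}
  | CForm.cond φ ψ => {x | ∀ y, R (csat le R V φ) x y → y ∈ csat le R V ψ}

/-- A conditional Kripke frame: a nonempty preordered set `(X, le)` with a
family of relations `R a` (indexed by the upsets `a`) satisfying the coherence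
condition `(≤ ∘ R_a) ⊆ (R_a ∘ ≤)`. -/
structure CondFrame where
  X : Type
  ne : Nonempty X
  le : X → X → Prop
  le_refl : ∀ x, le x x
  le_trans : ∀ ⦃x y z⦄, le x y → le y z → le x z
  R : Set X → X → X → Prop
  coh : ∀ a : Set X, IsUpset le a →
    ∀ ⦃x y z⦄, le x y → R a y z → ∃ w, R a x w ∧ le w z

/-- Validity on a conditional Kripke frame: truth at every world under every
valuation of the proposition letters by upsets. -/
def CondFrame.valid (F : CondFrame) (φ : CForm) : Prop :=
  ∀ V : ℕ → Set F.X, (∀ p, IsUpset F.le (V p)) → ∀ x, x ∈ csat F.le F.R V φ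

/-! ## Conditional Heyting algebras -/

/-- A conditional Heyting algebra: a Heyting algebra with a binary operation
`cond` (written `⊳` in the paper) preserving finite meets in its second
argument. -/
class CondHeyting (A : Type) extends HeytingAlgebra A where
  cond : A → A → A
  cond_inf : ∀ a b c : A, cond a (b ⊓ c) = cond a b ⊓ cond a c
  cond_top : ∀ a : A, cond a ⊤ = ⊤

/-- Evaluation of an `L_⊳`-formula in a conditional Heyting algebra under an
assignment `σ` of the proposition letters. -/
def evalCHA {A : Type} [CondHeyting A] (σ : ℕ → A) : CForm → A
  | CForm.var p => σ p
  | CForm.bot => ⊥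
  | CForm.and φ ψ => evalCHA σ φ ⊓ evalCHA σ ψ
  | CForm.or φ ψ => evalCHA σ φ ⊔ evalCHA σ ψ
  | CForm.imp φ ψ => evalCHA σ φ ⇨ evalCHA σ ψ
  | CForm.cond φ ψ => CondHeyting.cond (evalCHA σ φ) (evalCHA σ ψ)

/-- A formula is satisfied in a conditional Heyting algebra if it evaluates to
`⊤` under every assignment. -/
def chaSat (A : Type) [CondHeyting A] (φ : CForm) : Prop :=
  ∀ σ : ℕ → A, evalCHA σ φ = ⊤

/-- A prime filter: a proper, nonempty, upward closed subset, closed under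
binary meets, such that `a ⊔ b ∈ x` implies `a ∈ x` or `b ∈ x`. -/
def IsPrimeFilter {A : Type} [Lattice A] (x : Set A) : Prop :=
  x.Nonempty ∧ x ≠ Set.univ ∧
  (∀ ⦃a b : A⦄, a ∈ x → a ≤ b → b ∈ x) ∧
  (∀ ⦃a b : A⦄, a ∈ x → b ∈ x → a ⊓ b ∈ x) ∧
  (∀ ⦃a b : A⦄, a ⊔ b ∈ x → a ∈ x ∨ b ∈ x)

/-! ## General conditional frames -/

/-- A general conditional frame `(X, ≤, 𝓡, A)`. -/
structure GenFrame where
  X : Type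
  le : X → X → Prop
  le_refl : ∀ x, le x x
  le_trans : ∀ ⦃x y z⦄, le x y → le y z → le x z
  le_antisymm : ∀ ⦃x y⦄, le x y → le y x → x = y
  A : Set (Set X)
  upA : ∀ a ∈ A, IsUpset le a
  univ_mem : Set.univ ∈ A
  empty_mem : ∅ ∈ A
  inter_mem : ∀ a ∈ A, ∀ b ∈ A, a ∩ b ∈ A
  union_mem : ∀ a ∈ A, ∀ b ∈ A, a ∪ b ∈ A
  R : Set X → X → X → Prop
  himp_mem : ∀ a ∈ A, ∀ b ∈ A, {x | ∀ y, le x y → y ∈ a → y ∈ b} ∈ A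
  cimp_mem : ∀ a ∈ A, ∀ b ∈ A, {x | ∀ y, R a x y → y ∈ b} ∈ A
  coh : ∀ a ∈ A, ∀ ⦃x y z⦄, le x y → R a y z → ∃ w, R a x w ∧ le w z

/-- The carrier of the complex algebra of a general frame: the admissible
upsets. -/
def GenFrame.AUp (G : GenFrame) : Type := {a : Set G.X // a ∈ G.A}

instance GenFrame.instLatticeAUp (G : GenFrame) : Lattice G.AUp where
  le a b := a.val ⊆ b.val
  le_refl a := subset_rfl
  le_trans a b c h h' := Set.Subset.trans h h'
  le_antisymm a b h h' := Subtype.ext (subset_antisymm h h')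
  sup a b := ⟨a.val ∪ b.val, G.union_mem _ a.2 _ b.2⟩
  le_sup_left a b := Set.subset_union_left
  le_sup_right a b := Set.subset_union_right
  sup_le a b c h h' := Set.union_subset h h'
  inf a b := ⟨a.val ∩ b.val, G.inter_mem _ a.2 _ b.2⟩
  inf_le_left a b := Set.inter_subset_left
  inf_le_right a b := Set.inter_subset_right
  le_inf a b c h h' := Set.subset_inter h h'

instance GenFrame.instHeytingAUp (G : GenFrame) : HeytingAlgebra G.AUp :=
  { GenFrame.instLatticeAUp G with
    top := ⟨Set.univ, G.univ_mem⟩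
    le_top := fun a => Set.subset_univ _
    bot := ⟨∅, G.empty_mem⟩
    bot_le := fun a => Set.empty_subset _
    himp := fun a b => ⟨{x | ∀ y, G.le x y → y ∈ a.val → y ∈ b.val},
      G.himp_mem _ a.2 _ b.2⟩
    compl := fun a => ⟨{x | ∀ y, G.le x y → y ∈ a.val → y ∈ (∅ : Set G.X)},
      G.himp_mem _ a.2 _ G.empty_mem⟩
    le_himp_iff := by
      intro a b c
      show a.val ⊆ {x | ∀ y, G.le x y → y ∈ b.val → y ∈ c.val} ↔
        a.val ∩ b.val ⊆ c.val
      constructor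
      · rintro h x ⟨hxa, hxb⟩
        exact h hxa x (G.le_refl x) hxb
      · intro h x hxa y hle hyb
        exact h ⟨G.upA a.val a.2 hle hxa, hyb⟩
    himp_bot := fun a => rfl }

/-- The complex algebra `AUp(G)` of a general frame `G` is a conditional
Heyting algebra, with `a ⊳ b := {x | R_a[x] ⊆ b}`. -/
instance GenFrame.instCondHeytingAUp (G : GenFrame) : CondHeyting G.AUp where
  cond a b := ⟨{x | ∀ y, G.R a.val x y → y ∈ b.val}, G.cimp_mem _ a.2 _ b.2⟩
  cond_inf a b c := Subtype.ext (Set.ext fun x => by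
    show (∀ y, G.R a.val x y → y ∈ b.val ∩ c.val) ↔
      (∀ y, G.R a.val x y → y ∈ b.val) ∧ (∀ y, G.R a.val x y → y ∈ c.val)
    constructor
    · intro h
      exact ⟨fun y hy => (h y hy).1, fun y hy => (h y hy).2⟩
    · rintro ⟨h1, h2⟩ y hy
      exact ⟨h1 y hy, h2 y hy⟩)
  cond_top a := Subtype.ext (Set.ext fun x => by
    show (∀ y, G.R a.val x y → y ∈ (Set.univ : Set G.X)) ↔
      x ∈ (Set.univ : Set G.X)
    exact ⟨fun _ => trivial, fun _ y _ => trivial⟩)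

/-! ## Conditional Esakia spaces -/

/-- A conditional Esakia space: an Esakia space `(X, le, top)` together with a
family of relations `R a` indexed by the clopen upsets `a`, such that
`{x | R_a[x] ⊆ b}` is clopen for clopen upsets `a, b`, each `R_a[x]` is
closed, and `(≤ ∘ R_a ∘ ≤) = R_a`. -/
structure CondEsakia where
  X : Type
  ne : Nonempty X
  le : X → X → Prop
  le_refl : ∀ x, le x x
  le_trans : ∀ ⦃x y z⦄, le x y → le y z → le x z
  le_antisymm : ∀ ⦃x y⦄, le x y → le y x → x = y
  top : TopologicalSpace X
  compact : @CompactSpace X top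
  sep : ∀ x y : X, ¬ le x y →
    ∃ a : Set X, @IsClopen X top a ∧ IsUpset le a ∧ x ∈ a ∧ y ∉ a
  down_clopen : ∀ a : Set X, @IsClopen X top a →
    @IsClopen X top {x | ∃ y ∈ a, le x y}
  R : Set X → X → X → Prop
  box_clopen : ∀ a b : Set X, @IsClopen X top a → IsUpset le a →
    @IsClopen X top b → IsUpset le b →
    @IsClopen X top {x | ∀ y, R a x y → y ∈ b}
  coh : ∀ a : Set X, @IsClopen X top a → IsUpset le a →
    ∀ x z : X, (∃ x' y', le x x' ∧ R a x' y' ∧ le y' z) ↔ R a x z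
  im_closed : ∀ a : Set X, @IsClopen X top a → IsUpset le a →
    ∀ x : X, @IsClosed X top {y | R a x y}

/-- `a` is a clopen upset of the conditional Esakia space `S`. -/
def CondEsakia.ClopUp (S : CondEsakia) (a : Set S.X) : Prop :=
  @IsClopen S.X S.top a ∧ IsUpset S.le a

/-- Validity on a conditional Esakia space: truth at every world under every
valuation of the proposition letters by clopen upsets. -/
def CondEsakia.valid (S : CondEsakia) (φ : CForm) : Prop :=
  ∀ V : ℕ → Set S.X, (∀ p, S.ClopUp (V p)) → ∀ x, x ∈ csat S.le S.R V φ

/-- The family of relations of the empty fill-in `κ_∅(S)`: it agrees with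
`S.R` on clopen upsets and is empty on all other sets. -/
def CondEsakia.emptyFill (S : CondEsakia) : Set S.X → S.X → S.X → Prop :=
  fun a x y => S.ClopUp a ∧ S.R a x y

/-- Validity on the empty fill-in `κ_∅(S)`, a conditional Kripke frame:
truth at every world under every valuation by (arbitrary) upsets. -/
def CondEsakia.emptyFillValid (S : CondEsakia) (φ : CForm) : Prop :=
  ∀ V : ℕ → Set S.X, (∀ p, IsUpset S.le (V p)) →
    ∀ x, x ∈ csat S.le S.emptyFill V φ

/-! ## The modal language `L_□` -/

/-- Formulas of the modal language `L_□`. -/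
inductive MForm : Type where
  | var : ℕ → MForm
  | bot : MForm
  | and : MForm → MForm → MForm
  | or : MForm → MForm → MForm
  | imp : MForm → MForm → MForm
  | box : MForm → MForm

/-- The translation `(−)^p : L_□ → L_⊳`: it fixes proposition letters, `⊥`,
`∧`, `∨`, `→`, and sends `□ψ` to `p ⊳ ψ^p`. -/
def MForm.transl (p : ℕ) : MForm → CForm
  | MForm.var q => CForm.var q
  | MForm.bot => CForm.bot
  | MForm.and φ ψ => CForm.and (φ.transl p) (ψ.transl p)
  | MForm.or φ ψ => CForm.or (φ.transl p) (ψ.transl p)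
  | MForm.imp φ ψ => CForm.imp (φ.transl p) (ψ.transl p)
  | MForm.box φ => CForm.cond (CForm.var p) (φ.transl p)

/-- The proposition letter `p` occurs (as a subformula) in a modal formula. -/
def MForm.occurs (p : ℕ) : MForm → Prop
  | MForm.var q => p = q
  | MForm.bot => False
  | MForm.and φ ψ => φ.occurs p ∨ ψ.occurs p
  | MForm.or φ ψ => φ.occurs p ∨ ψ.occurs p
  | MForm.imp φ ψ => φ.occurs p ∨ ψ.occurs p
  | MForm.box φ => φ.occurs p

/-- Truth sets of `L_□`-formulas in a modal model, by intuitionistic Kripke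
semantics with `x ⊨ □φ` iff every `y` with `x R y` satisfies `φ`. -/
def msat {X : Type} (le : X → X → Prop) (R : X → X → Prop)
    (V : ℕ → Set X) : MForm → Set X
  | MForm.var p => V p
  | MForm.bot => ∅
  | MForm.and φ ψ => msat le R V φ ∩ msat le R V ψ
  | MForm.or φ ψ => msat le R V φ ∪ msat le R V ψ
  | MForm.imp φ ψ => {x | ∀ y, le x y → y ∈ msat le R V φ → y ∈ msat le R V ψ}
  | MForm.box φ => {x | ∀ y, R x y → y ∈ msat le R V φ}

/-- A modal Esakia space: an Esakia space with a relation `R` such that each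
`R[x]` is closed and `R = (≤ ∘ R ∘ ≤)`. -/
structure ModalEsakia where
  X : Type
  ne : Nonempty X
  le : X → X → Prop
  le_refl : ∀ x, le x x
  le_trans : ∀ ⦃x y z⦄, le x y → le y z → le x z
  le_antisymm : ∀ ⦃x y⦄, le x y → le y x → x = y
  top : TopologicalSpace X
  compact : @CompactSpace X top
  sep : ∀ x y : X, ¬ le x y →
    ∃ a : Set X, @IsClopen X top a ∧ IsUpset le a ∧ x ∈ a ∧ y ∉ a
  down_clopen : ∀ a : Set X, @IsClopen X top a →
    @IsClopen X top {x | ∃ y ∈ a, le x y}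
  R : X → X → Prop
  im_closed : ∀ x : X, @IsClosed X top {y | R x y}
  coh : ∀ x z : X, (∃ x' y', le x x' ∧ R x' y' ∧ le y' z) ↔ R x z

/-- Validity on a modal Esakia space: truth everywhere under every valuation
by clopen upsets. -/
def ModalEsakia.valid (M : ModalEsakia) (φ : MForm) : Prop :=
  ∀ V : ℕ → Set M.X, (∀ p, @IsClopen M.X M.top (V p) ∧ IsUpset M.le (V p)) →
    ∀ x, x ∈ msat M.le M.R V φ

/-- Validity on the underlying modal frame `κ(M)` of a modal Esakia space:
truth everywhere under every valuation by arbitrary upsets. -/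
def ModalEsakia.frameValid (M : ModalEsakia) (φ : MForm) : Prop :=
  ∀ V : ℕ → Set M.X, (∀ p, IsUpset M.le (V p)) → ∀ x, x ∈ msat M.le M.R V φ

/-- An `L_□`-formula is d-persistent if its validity on a modal Esakia space
implies its validity on the underlying modal frame. -/
def DPersistent (φ : MForm) : Prop :=
  ∀ M : ModalEsakia, M.valid φ → M.frameValid φ

/-- The axiom `(id)  p ⊳ p`. -/
def axId : CForm := CForm.cond (CForm.var 0) (CForm.var 0)

/-- The transitivity axiom `(tr)  ((p ⊳ q) ∧ (q ⊳ r)) → (p ⊳ r)`. -/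
def axTr : CForm :=
  CForm.imp (CForm.and (CForm.cond (CForm.var 0) (CForm.var 1))
      (CForm.cond (CForm.var 1) (CForm.var 2)))
    (CForm.cond (CForm.var 0) (CForm.var 2))

/-! ### Soundness -/

theorem csat_upset (F : CondFrame) (V : ℕ → Set F.X) (hV : ∀ p, IsUpset F.le (V p))
    (φ : CForm) : IsUpset F.le (csat F.le F.R V φ) := by
  induction φ with
  | var p => exact hV p
  | bot => intro x y _ h; exact h
  | and φ ψ ih1 ih2 => intro x y h hx; exact ⟨ih1 h hx.1, ih2 h hx.2⟩
  | or φ ψ ih1 ih2 =>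
    intro x y h hx
    rcases hx with hx | hx
    · exact Or.inl (ih1 h hx)
    · exact Or.inr (ih2 h hx)
  | imp φ ψ ih1 ih2 => intro x y h hx z hz; exact hx z (F.le_trans h hz)
  | cond φ ψ ih1 ih2 =>
    intro x y h hx z hz
    obtain ⟨w, hw, hwz⟩ := F.coh _ ih1 h hz
    exact ih2 hwz (hx w hw)

theorem csat_psubst (F : CondFrame) (V : ℕ → Set F.X) (σ : ℕ → CForm) (φ : CForm) :
    csat F.le F.R V (psubst σ φ) = csat F.le F.R (fun p => csat F.le F.R V (σ p)) φ := by
  induction φ with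
  | var p => rfl
  | bot => rfl
  | and φ ψ ih1 ih2 => simp only [psubst, csat, ih1, ih2]
  | or φ ψ ih1 ih2 => simp only [psubst, csat, ih1, ih2]
  | imp φ ψ ih1 ih2 => simp only [psubst, csat, ih1, ih2]
  | cond φ ψ ih1 ih2 => simp only [psubst, csat, ih1, ih2]

theorem csat_eq_of_iff (F : CondFrame) (V : ℕ → Set F.X) (φ ψ : CForm)
    (h : ∀ x, x ∈ csat F.le F.R V (cIff φ ψ)) :
    csat F.le F.R V φ = csat F.le F.R V ψ := by
  ext x
  exact ⟨(h x).1 x (F.le_refl x), (h x).2 x (F.le_refl x)⟩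

theorem csat_iff_of_eq (F : CondFrame) (V : ℕ → Set F.X) (φ ψ : CForm)
    (h : csat F.le F.R V φ = csat F.le F.R V ψ) (x : F.X) :
    x ∈ csat F.le F.R V (cIff φ ψ) := by
  refine ⟨fun y _ hy => ?_, fun y _ hy => ?_⟩
  · exact h ▸ hy
  · exact h ▸ hy

theorem hlc_sound (F : CondFrame)
    (hF : ∀ (x : F.X) (a b : Set F.X), IsUpset F.le a → IsUpset F.le b →
          ({y | F.R a x y} ⊆ a ∧
            ({y | F.R a x y} ⊆ b →
              {y | F.R a x y} ⊆ upCl F.le {y | F.R b x y})))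
    (φ : CForm) (h : ICK {axId, axTr} φ) : F.valid φ := by
  induction h with
  | prem h =>
    intro V hV x
    rcases h with rfl | rfl
    · exact (hF x (V 0) (V 0) (hV 0) (hV 0)).1
    · intro y _ hy z hz
      obtain ⟨w, hw, hwz⟩ := (hF y (V 0) (V 1) (hV 0) (hV 1)).2 hy.1 hz
      exact hV 2 hwz (hy.2 w hw)
  | a1 => intro V hV x y _ hy; exact hy.1
  | a2 => intro V hV x y _ hy; exact hy.2
  | a3 =>
    intro V hV x y _ hy z hz hz' w hw hw'
    exact ⟨hy w (F.le_trans hz hw) hw', hz' w hw hw'⟩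
  | a4 => intro V hV x y _ hy; exact Or.inl hy
  | a5 => intro V hV x y _ hy; exact Or.inr hy
  | a6 =>
    intro V hV x y _ hy z hz hz' w hw hw'
    rcases hw' with h | h
    · exact hy w (F.le_trans hz hw) h
    · exact hz' w hw h
  | a7 => intro V hV x y _ hy; exact hy.elim
  | a8 => intro V hV x y _ hy z hz _; exact hV 0 hz hy
  | a9 =>
    intro V hV x y _ hy z hz hz' w hw hw'
    exact hy w (F.le_trans hz hw) hw' w (F.le_refl w) (hz' w hw hw')
  | kc =>
    intro V hV x
    refine ⟨fun y _ hy => ⟨fun z hz => (hy z hz).1, fun z hz => (hy z hz).2⟩, ?_⟩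
    intro y _ hy z hz
    exact ⟨hy.1 z hz, hy.2 z hz⟩
  | nc =>
    intro V hV x
    exact ⟨fun y _ _ z _ h => h, fun y _ _ z _ w _ h => h⟩
  | subst σ _ ih =>
    intro V hV x
    rw [csat_psubst]
    exact ih _ (fun p => csat_upset F V hV (σ p)) x
  | mp _ _ ih1 ih2 =>
    intro V hV x
    exact ih1 V hV x x (F.le_refl x) (ih2 V hV x)
  | congL _ ih =>
    intro V hV x
    apply csat_iff_of_eq
    have := csat_eq_of_iff F V _ _ (ih V hV)
    simp only [csat, this]
  | congR _ ih =>
    intro V hV x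
    apply csat_iff_of_eq
    have := csat_eq_of_iff F V _ _ (ih V hV)
    simp only [csat, this]

/-! ### Theories -/

/-- Theorems of the logic. -/
abbrev LThm (φ : CForm) : Prop := ICK {axId, axTr} φ

/-- The substitution sending the first three letters to `a`, `b`, `c`. -/
def sub3 (a b c : CForm) : ℕ → CForm
  | 0 => a
  | 1 => b
  | _ => c

/-- A theory: contains the logic and is closed under modus ponens. -/
structure Thy (T : Set CForm) : Prop where
  ax : ∀ φ, LThm φ → φ ∈ T
  mp : ∀ φ ψ, CForm.imp φ ψ ∈ T → φ ∈ T → ψ ∈ T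

theorem thy_logic : Thy {φ | LThm φ} := ⟨fun _ h => h, fun _ _ h h' => ICK.mp h h'⟩

theorem l1 (a b : CForm) : LThm (.imp (.and a b) a) := ICK.subst (sub3 a b a) ICK.a1
theorem l2 (a b : CForm) : LThm (.imp (.and a b) b) := ICK.subst (sub3 a b a) ICK.a2
theorem l3 (a b c : CForm) :
    LThm (.imp (.imp a b) (.imp (.imp a c) (.imp a (.and b c)))) :=
  ICK.subst (sub3 a b c) ICK.a3
theorem l4 (a b : CForm) : LThm (.imp a (.or a b)) := ICK.subst (sub3 a b a) ICK.a4
theorem l5 (a b : CForm) : LThm (.imp b (.or a b)) := ICK.subst (sub3 a b a) ICK.a5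
theorem l6 (a b c : CForm) :
    LThm (.imp (.imp a c) (.imp (.imp b c) (.imp (.or a b) c))) :=
  ICK.subst (sub3 a b c) ICK.a6
theorem l7 (a : CForm) : LThm (.imp .bot a) := ICK.subst (sub3 a a a) ICK.a7
theorem l8 (a b : CForm) : LThm (.imp a (.imp b a)) := ICK.subst (sub3 a b a) ICK.a8
theorem l9 (a b c : CForm) :
    LThm (.imp (.imp a (.imp b c)) (.imp (.imp a b) (.imp a c))) :=
  ICK.subst (sub3 a b c) ICK.a9
theorem lkc (a b c : CForm) :
    LThm (cIff (.cond a (.and b c)) (.and (.cond a b) (.cond a c))) :=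
  ICK.subst (sub3 a b c) ICK.kc
theorem lnc (a : CForm) : LThm (cIff (.cond a cTop) cTop) :=
  ICK.subst (sub3 a a a) ICK.nc
theorem lid (a : CForm) : LThm (.cond a a) :=
  ICK.subst (sub3 a a a) (ICK.prem (φ := axId) (Or.inl rfl))
theorem ltr (a b c : CForm) : LThm (.imp (.and (.cond a b) (.cond b c)) (.cond a c)) :=
  ICK.subst (sub3 a b c) (ICK.prem (φ := axTr) (Or.inr rfl))
theorem lrefl (a : CForm) : LThm (.imp a a) :=
  ICK.mp (ICK.mp (l9 a (.imp a a) a) (l8 a (.imp a a))) (l8 a a)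

namespace Thy

theorem ax_mp {T : Set CForm} (hT : Thy T) {a b : CForm} (h : LThm (.imp a b)) (ha : a ∈ T) : b ∈ T :=
  hT.mp _ _ (hT.ax _ h) ha

theorem and_iff {T : Set CForm} (hT : Thy T) (a b : CForm) : CForm.and a b ∈ T ↔ a ∈ T ∧ b ∈ T := by
  refine ⟨fun h => ⟨hT.ax_mp (l1 a b) h, hT.ax_mp (l2 a b) h⟩, fun ⟨ha, hb⟩ => ?_⟩
  have h1 := hT.ax_mp (l8 a a) ha
  have h2 := hT.ax_mp (l8 b a) hb
  exact hT.mp _ _ (hT.mp _ _ (hT.ax_mp (l3 a a b) h1) h2) ha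

theorem add {T : Set CForm} (hT : Thy T) (a : CForm) : Thy {ψ | CForm.imp a ψ ∈ T} where
  ax φ h := hT.ax_mp (l8 φ a) (hT.ax _ h)
  mp φ ψ h h' := hT.mp _ _ (hT.ax_mp (l9 a φ ψ) h) h'

theorem iff_mem {T : Set CForm} (hT : Thy T) {a b : CForm} (h : LThm (cIff a b)) : a ∈ T ↔ b ∈ T := by
  have := (hT.and_iff _ _).1 (hT.ax _ h)
  exact ⟨hT.mp _ _ this.1, hT.mp _ _ this.2⟩

end Thy

theorem l_iff {a b : CForm} (h : LThm (.imp a b)) (h' : LThm (.imp b a)) : LThm (cIff a b) :=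
  (thy_logic.and_iff _ _).2 ⟨h, h'⟩

/-- A theorem is proved by deduction inside every theory containing the hypothesis. -/
theorem l_imp {a b : CForm} (h : ∀ T, Thy T → a ∈ T → b ∈ T) : LThm (.imp a b) :=
  h _ (thy_logic.add a) (lrefl a)

theorem Thy.cond_mono {T : Set CForm} (hT : Thy T) {a b c : CForm} (h : LThm (.imp b c))
    (hb : CForm.cond a b ∈ T) : CForm.cond a c ∈ T := by
  have e : LThm (cIff b (.and b c)) :=
    l_iff (l_imp fun S hS hb => (hS.and_iff _ _).2 ⟨hb, hS.ax_mp h hb⟩) (l1 b c)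
  have h1 := (hT.iff_mem (ICK.congR (χ := a) e)).1 hb
  exact ((hT.and_iff _ _).1 ((hT.iff_mem (lkc a b c)).1 h1)).2

theorem Thy.box {T : Set CForm} (hT : Thy T) (a : CForm) : Thy {ψ | CForm.cond a ψ ∈ T} where
  ax φ h := by
    have h1 : CForm.cond a cTop ∈ T := (hT.iff_mem (lnc a)).2 (hT.ax _ (lrefl _))
    exact hT.cond_mono (ICK.mp (l8 φ cTop) h) h1
  mp φ ψ h h' := by
    have h1 : CForm.cond a (.and (.imp φ ψ) φ) ∈ T :=
      (hT.iff_mem (lkc _ _ _)).2 ((hT.and_iff _ _).2 ⟨h, h'⟩)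
    refine hT.cond_mono (l_imp fun S hS hb => ?_) h1
    obtain ⟨h2, h3⟩ := (hS.and_iff _ _).1 hb
    exact hS.mp _ _ h2 h3

/-- Prime theories. -/
structure PThy (T : Set CForm) : Prop extends Thy T where
  bot : CForm.bot ∉ T
  or : ∀ a b, CForm.or a b ∈ T → a ∈ T ∨ b ∈ T

theorem lindenbaum {T : Set CForm} (hT : Thy T) {φ : CForm} (hφ : φ ∉ T) :
    ∃ P, PThy P ∧ T ⊆ P ∧ φ ∉ P := by
  obtain ⟨M, hTM, hM⟩ := zorn_subset_nonempty {S : Set CForm | Thy S ∧ φ ∉ S} (by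
    intro c hc hchain hne
    refine ⟨⋃₀ c, ⟨⟨?_, ?_⟩, ?_⟩, fun s hs => Set.subset_sUnion_of_mem hs⟩
    · intro ψ h
      obtain ⟨s, hs⟩ := hne
      exact ⟨s, hs, (hc hs).1.ax _ h⟩
    · rintro α β ⟨s, hs, h1⟩ ⟨t, ht, h2⟩
      rcases hchain.total hs ht with h | h
      · exact ⟨t, ht, (hc ht).1.mp _ _ (h h1) h2⟩
      · exact ⟨s, hs, (hc hs).1.mp _ _ h1 (h h2)⟩
    · rintro ⟨s, hs, h⟩
      exact (hc hs).2 h) T ⟨hT, hφ⟩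
  have hth : Thy M := hM.prop.1
  have hn : φ ∉ M := hM.prop.2
  have key : ∀ a, a ∉ M → CForm.imp a φ ∈ M := by
    intro a ha
    by_contra hcon
    have hsub : M ⊆ {ψ | CForm.imp a ψ ∈ M} := fun ψ h => hth.ax_mp (l8 ψ a) h
    have := hM.le_of_ge (y := {ψ | CForm.imp a ψ ∈ M}) ⟨hth.add a, hcon⟩ hsub
    exact ha (this (hth.ax _ (lrefl a)))
  refine ⟨M, ⟨hth, fun h => hn (hth.ax_mp (l7 φ) h), ?_⟩, hTM, hn⟩
  intro a b hab
  by_contra! hcon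
  exact hn (hth.mp _ _ (hth.mp _ _ (hth.ax_mp (l6 a b φ) (key a hcon.1)) (key b hcon.2)) hab)

/-! ### The canonical frame -/

/-- Worlds of the canonical frame. -/
abbrev CanW : Type := {T : Set CForm // PThy T}

/-- Canonical successors along a formula. -/
def canS (φ : CForm) (x : CanW) : Set CanW := {z | ∀ ψ, CForm.cond φ ψ ∈ x.1 → ψ ∈ z.1}

/-- Canonical relations, for arbitrary sets of worlds. -/
def canR (a : Set CanW) (x z : CanW) : Prop :=
  ∃ y : CanW, x.1 ⊆ y.1 ∧ ∃ φ, canS φ y ⊆ a ∧ z ∈ canS φ y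

theorem cond_mem_iff (x : CanW) (φ ψ : CForm) :
    CForm.cond φ ψ ∈ x.1 ↔ ∀ z ∈ canS φ x, ψ ∈ z.1 := by
  refine ⟨fun h z hz => hz ψ h, fun h => ?_⟩
  by_contra hcon
  obtain ⟨P, hP, hsub, hn⟩ := lindenbaum (x.2.toThy.box φ) hcon
  exact hn (h ⟨P, hP⟩ fun χ hχ => hsub hχ)

theorem canR_def (φ : CForm) (x z : CanW) : canR {w | φ ∈ w.1} x z ↔ z ∈ canS φ x := by
  constructor
  · rintro ⟨y, hxy, ψ, hsub, hz⟩ χ hχ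
    have h1 : CForm.cond ψ φ ∈ y.1 := (cond_mem_iff y ψ φ).2 fun w hw => hsub hw
    exact hz χ (y.2.toThy.ax_mp (ltr ψ φ χ) ((y.2.toThy.and_iff _ _).2 ⟨h1, hxy hχ⟩))
  · intro hz
    exact ⟨x, subset_rfl, φ, fun w hw => hw φ (x.2.toThy.ax _ (lid φ)), hz⟩

/-- The canonical frame. -/
def canF (h : Nonempty CanW) : CondFrame where
  X := CanW
  ne := h
  le x y := x.1 ⊆ y.1
  le_refl _ := subset_rfl
  le_trans _ _ _ h h' := Set.Subset.trans h h'
  R := canR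
  coh := by
    rintro a _ x y z hxy ⟨y', hy, hr⟩
    exact ⟨z, ⟨y', hxy.trans hy, hr⟩, subset_rfl⟩

theorem truth_lemma (h : Nonempty CanW) (φ : CForm) :
    csat (canF h).le (canF h).R (fun p => {x : CanW | CForm.var p ∈ x.1}) φ
      = {x : CanW | φ ∈ x.1} := by
  induction φ with
  | var p => rfl
  | bot =>
    ext x
    exact ⟨fun h => h.elim, fun h => (x.2.bot h).elim⟩
  | and φ ψ ih1 ih2 =>
    simp only [csat, ih1, ih2]
    ext x
    exact (x.2.toThy.and_iff φ ψ).symm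
  | or φ ψ ih1 ih2 =>
    simp only [csat, ih1, ih2]
    ext x
    refine ⟨fun h => ?_, fun h => x.2.or _ _ h⟩
    rcases h with h | h
    · exact x.2.toThy.ax_mp (l4 φ ψ) h
    · exact x.2.toThy.ax_mp (l5 φ ψ) h
  | imp φ ψ ih1 ih2 =>
    simp only [csat, ih1, ih2]
    ext x
    refine ⟨fun h => ?_, fun h y hy h' => y.2.toThy.mp _ _ (hy h) h'⟩
    by_contra hcon
    obtain ⟨P, hP, hsub, hn⟩ := lindenbaum (x.2.toThy.add φ) hcon
    exact hn (h ⟨P, hP⟩ (fun χ hχ => hsub (x.2.toThy.ax_mp (l8 χ φ) hχ))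
      (hsub (x.2.toThy.ax _ (lrefl φ))))
  | cond φ ψ ih1 ih2 =>
    simp only [csat, ih1, ih2]
    ext x
    refine Iff.trans ?_ (cond_mem_iff x φ ψ).symm
    exact forall_congr' fun z => imp_congr_left (canR_def φ x z)

/-- `ICK ⊕ (id) ⊕ (tr)` is sound and complete with respect
to conditional Kripke frames satisfying, for all worlds `x` and upsets `a, b`:
`R_a[x] ⊆ a`, and `R_a[x] ⊆ b` implies `R_a[x] ⊆ ↑(R_b[x])`. -/
theorem hlcflat_completeness (φ : CForm) :
    ICK {axId, axTr} φ ↔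
      ∀ F : CondFrame,
        (∀ (x : F.X) (a b : Set F.X), IsUpset F.le a → IsUpset F.le b →
          ({y | F.R a x y} ⊆ a ∧
            ({y | F.R a x y} ⊆ b →
              {y | F.R a x y} ⊆ upCl F.le {y | F.R b x y}))) →
        F.valid φ := by
  constructor
  · intro h F hF
    exact hlc_sound F hF φ h
  · intro h
    by_contra hcon
    obtain ⟨P, hP, -, hn⟩ := lindenbaum thy_logic (φ := φ) hcon
    have hv := h (canF ⟨⟨P, hP⟩⟩) (by
      intro x a b _ _
      refine ⟨?_, ?_⟩
      · rintro z ⟨y, _, ψ, hsub, hz⟩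
        exact hsub hz
      · rintro hab z ⟨y, hxy, ψ, hsub, hz⟩
        exact ⟨z, ⟨y, hxy, ψ, fun w hw => hab ⟨y, hxy, ψ, hsub, hw⟩, hz⟩, subset_rfl⟩)
      (fun p => {x : CanW | CForm.var p ∈ x.1}) (fun p x y hxy hx => hxy hx) ⟨P, hP⟩
    rw [truth_lemma] at hv
    exact hn hv
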